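/- For an integer J ≥ 0 define m_J(ξ) := (1/(J+1)) · Σ_{j=0}^{J} φ(ξ/2^j). Then: (i) 0 ≤ m_J(ξ) ≤ 1 for every ξ ∈ ℝ; (ii) m_J(ξ) = 1 whenever |ξ| ≤ 1; (iii) m_J(ξ) = 0 whenever |ξ| ≥ 2^{J+1}; (iv) for every ξ ∈ ℝ and every natural number k, 0 ≤ m_J(ξ) − m_J(2^k ξ) ≤ k/(J+1). -/

import Mathlib

/-- The logarithmically averaged multiplier symbol `m_J(ξ) = (1/(J+1)) ∑_{j=0}^J φ(ξ/2^j)`. -/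
noncomputable def mSymbol (φ : ℝ → ℝ) (J : ℕ) (ξ : ℝ) : ℝ :=
  (1 / (J + 1 : ℝ)) * ∑ j ∈ Finset.range (J + 1), φ (ξ / 2 ^ j)

/-!
Doubling `ξ` shifts the dyadic samples `ξ / 2 ^ j` by one index, so all but the two extreme terms
of `m_J(ξ) - m_J(2ξ)` cancel and the difference is at most `1 / (J + 1)`. Iterating this `k` times
gives the estimate for `2 ^ k`.
-/

open Finset
open scoped BigOperators

section Monoid

variable {M : Type*} [Monoid M] {r : M}

lemma apply_pow_mul_le_apply {α : Type*} [Preorder α] {f : M → α} (h : ∀ x, f (r * x) ≤ f x)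
    (k : ℕ) (x : M) : f (r ^ k * x) ≤ f x := by
  induction k with
  | zero => rw [pow_zero, one_mul]
  | succ k ih =>
    rw [pow_succ', mul_assoc]
    exact (h _).trans ih

lemma apply_sub_apply_pow_mul_le_nsmul {G : Type*} [AddCommGroup G] [PartialOrder G]
    [IsOrderedAddMonoid G] {f : M → G} {C : G} (h : ∀ x, f x - f (r * x) ≤ C) (k : ℕ) (x : M) :
    f x - f (r ^ k * x) ≤ k • C := by
  induction k with
  | zero => rw [pow_zero, one_mul, sub_self, zero_nsmul]
  | succ k ih =>
    calc f x - f (r ^ (k + 1) * x)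
        = (f x - f (r ^ k * x)) + (f (r ^ k * x) - f (r * (r ^ k * x))) := by
          rw [sub_add_sub_cancel, pow_succ', mul_assoc]
      _ ≤ k • C + C := add_le_add ih (h _)
      _ = (k + 1) • C := (succ_nsmul C k).symm

end Monoid

lemma apply_le_apply_of_even_of_antitoneOn {α β : Type*} [AddCommGroup α] [LinearOrder α]
    [IsOrderedAddMonoid α] [Preorder β] {f : α → β} (h_even : f.Even)
    (h_anti : AntitoneOn f (Set.Ici 0)) {x y : α} (hxy : |x| ≤ |y|) : f y ≤ f x := by
  have apply_abs (z : α) : f |z| = f z := by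
    rcases abs_choice z with hz | hz <;> simp only [hz, h_even.eq]
  rw [← apply_abs x, ← apply_abs y]
  exact h_anti (abs_nonneg x) (abs_nonneg y) hxy

lemma abs_le_abs_two_mul (x : ℝ) : |x| ≤ |2 * x| := by
  rw [abs_mul, abs_two]
  exact le_mul_of_one_le_left (abs_nonneg x) one_le_two

lemma abs_div_two_pow (x : ℝ) (j : ℕ) : |x / 2 ^ j| = |x| / 2 ^ j := by
  rw [abs_div, abs_pow, abs_two]

section mSymbol

variable {φ : ℝ → ℝ} {J : ℕ} {ξ η a b c C R : ℝ}

lemma mSymbol_eq_expect (φ : ℝ → ℝ) (J : ℕ) (ξ : ℝ) :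
    mSymbol φ J ξ = 𝔼 j ∈ range (J + 1), φ (ξ / 2 ^ j) := by
  rw [mSymbol, one_div_mul_eq_div, expect_eq_sum_div_card, card_range, Nat.cast_succ]

lemma mSymbol_le_mSymbol (h : ∀ j ≤ J, φ (ξ / 2 ^ j) ≤ φ (η / 2 ^ j)) :
    mSymbol φ J ξ ≤ mSymbol φ J η := by
  simp only [mSymbol_eq_expect]
  exact expect_le_expect fun j hj ↦ h j (mem_range_succ_iff.mp hj)

lemma mSymbol_le_of_forall_le (h : ∀ j ≤ J, φ (ξ / 2 ^ j) ≤ b) : mSymbol φ J ξ ≤ b := by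
  rw [mSymbol_eq_expect]
  exact expect_le nonempty_range_add_one fun j hj ↦ h j (mem_range_succ_iff.mp hj)

lemma le_mSymbol_of_forall_le (h : ∀ j ≤ J, a ≤ φ (ξ / 2 ^ j)) : a ≤ mSymbol φ J ξ := by
  rw [mSymbol_eq_expect]
  exact le_expect nonempty_range_add_one fun j hj ↦ h j (mem_range_succ_iff.mp hj)

lemma mSymbol_eq_of_forall_eq (h : ∀ j ≤ J, φ (ξ / 2 ^ j) = c) : mSymbol φ J ξ = c :=
  le_antisymm (mSymbol_le_of_forall_le fun j hj ↦ (h j hj).le)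
    (le_mSymbol_of_forall_le fun j hj ↦ (h j hj).ge)

lemma mSymbol_eq_of_abs_le (hφ : ∀ x, |x| ≤ R → φ x = c) (hξ : |ξ| ≤ R) :
    mSymbol φ J ξ = c := by
  refine mSymbol_eq_of_forall_eq fun j _ ↦ hφ _ ?_
  calc |ξ / 2 ^ j| = |ξ| / 2 ^ j := abs_div_two_pow ξ j
    _ ≤ |ξ| := div_le_self (abs_nonneg ξ) (one_le_pow₀ one_le_two)
    _ ≤ R := hξ

lemma mSymbol_eq_of_le_abs_div_two_pow (hφ : ∀ x, R ≤ |x| → φ x = c)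
    (hξ : R ≤ |ξ| / 2 ^ J) : mSymbol φ J ξ = c := by
  refine mSymbol_eq_of_forall_eq fun j hj ↦ hφ _ ?_
  calc R ≤ |ξ| / 2 ^ J := hξ
    _ ≤ |ξ| / 2 ^ j := by gcongr; exact one_le_two
    _ = |ξ / 2 ^ j| := (abs_div_two_pow ξ j).symm

lemma mSymbol_two_mul_le (hφ : ∀ x, φ (2 * x) ≤ φ x) (ξ : ℝ) :
    mSymbol φ J (2 * ξ) ≤ mSymbol φ J ξ :=
  mSymbol_le_mSymbol fun j _ ↦ by
    rw [mul_div_assoc]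
    exact hφ _

lemma mSymbol_sub_mSymbol_two_mul (φ : ℝ → ℝ) (J : ℕ) (ξ : ℝ) :
    mSymbol φ J ξ - mSymbol φ J (2 * ξ) = (φ (ξ / 2 ^ J) - φ (2 * ξ)) / (J + 1) := by
  have halve (j : ℕ) : ξ / 2 ^ j = 2 * ξ / 2 ^ (j + 1) := by
    rw [pow_succ', mul_div_mul_left _ _ two_ne_zero]
  have telescope := sum_range_sub (fun j ↦ φ (2 * ξ / 2 ^ j)) (J + 1)
  simp only [← halve, pow_zero, div_one, sum_sub_distrib] at telescope
  rw [mSymbol, mSymbol, ← mul_sub, telescope, one_div_mul_eq_div]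

lemma mSymbol_sub_mSymbol_two_pow_mul_le (hφ : ∀ x y, φ x - φ y ≤ C) (k : ℕ) (ξ : ℝ) :
    mSymbol φ J ξ - mSymbol φ J (2 ^ k * ξ) ≤ k * (C / (J + 1)) := by
  rw [← nsmul_eq_mul]
  refine apply_sub_apply_pow_mul_le_nsmul (fun x ↦ ?_) k ξ
  rw [mSymbol_sub_mSymbol_two_mul]
  gcongr
  exact hφ _ _

end mSymbol

theorem mSymbol_properties_general (φ : ℝ → ℝ)
    (hφ_nonneg : ∀ ξ, 0 ≤ φ ξ) (hφ_le_one : ∀ ξ, φ ξ ≤ 1)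
    (hφ_one : ∀ ξ : ℝ, |ξ| ≤ 1 → φ ξ = 1)
    (hφ_zero : ∀ ξ : ℝ, 2 ≤ |ξ| → φ ξ = 0)
    (hφ_two_mul : ∀ ξ : ℝ, φ (2 * ξ) ≤ φ ξ)
    (J : ℕ) :
    (∀ ξ : ℝ, 0 ≤ mSymbol φ J ξ ∧ mSymbol φ J ξ ≤ 1) ∧
    (∀ ξ : ℝ, |ξ| ≤ 1 → mSymbol φ J ξ = 1) ∧
    (∀ ξ : ℝ, (2 : ℝ) ^ (J + 1) ≤ |ξ| → mSymbol φ J ξ = 0) ∧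
    (∀ ξ : ℝ, ∀ k : ℕ,
      0 ≤ mSymbol φ J ξ - mSymbol φ J (2 ^ k * ξ) ∧
      mSymbol φ J ξ - mSymbol φ J (2 ^ k * ξ) ≤ (k : ℝ) / (J + 1)) := by
  have hφ_sub_le (x y : ℝ) : φ x - φ y ≤ 1 := by linarith [hφ_le_one x, hφ_nonneg y]
  refine ⟨fun ξ ↦ ⟨?_, ?_⟩, fun ξ hξ ↦ ?_, fun ξ hξ ↦ ?_, fun ξ k ↦ ⟨?_, ?_⟩⟩
  · exact le_mSymbol_of_forall_le fun j _ ↦ hφ_nonneg _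
  · exact mSymbol_le_of_forall_le fun j _ ↦ hφ_le_one _
  · exact mSymbol_eq_of_abs_le hφ_one hξ
  · refine mSymbol_eq_of_le_abs_div_two_pow hφ_zero ?_
    rwa [le_div_iff₀' (by positivity), ← pow_succ]
  · exact sub_nonneg.mpr (apply_pow_mul_le_apply (mSymbol_two_mul_le hφ_two_mul) k ξ)
  · simpa only [mul_one_div] using mSymbol_sub_mSymbol_two_pow_mul_le hφ_sub_le k ξ

/-- Basic properties of the averaged symbol `m_J`: bounds, value `1` at low
frequencies, vanishing at high frequencies, and the key difference estimate
`0 ≤ m_J(ξ) − m_J(2^k ξ) ≤ k/(J+1)`. -/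
theorem mSymbol_properties (φ : ℝ → ℝ)
    (hφ_smooth : ContDiff ℝ (⊤ : ℕ∞) φ)
    (hφ_nonneg : ∀ ξ, 0 ≤ φ ξ) (hφ_le_one : ∀ ξ, φ ξ ≤ 1)
    (hφ_one : ∀ ξ : ℝ, |ξ| ≤ 1 → φ ξ = 1)
    (hφ_zero : ∀ ξ : ℝ, 2 ≤ |ξ| → φ ξ = 0)
    (hφ_even : ∀ ξ : ℝ, φ (-ξ) = φ ξ)
    (hφ_mono : AntitoneOn φ (Set.Ici 0))
    (J : ℕ) :
    (∀ ξ : ℝ, 0 ≤ mSymbol φ J ξ ∧ mSymbol φ J ξ ≤ 1) ∧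
    (∀ ξ : ℝ, |ξ| ≤ 1 → mSymbol φ J ξ = 1) ∧
    (∀ ξ : ℝ, (2 : ℝ) ^ (J + 1) ≤ |ξ| → mSymbol φ J ξ = 0) ∧
    (∀ ξ : ℝ, ∀ k : ℕ,
      0 ≤ mSymbol φ J ξ - mSymbol φ J (2 ^ k * ξ) ∧
      mSymbol φ J ξ - mSymbol φ J (2 ^ k * ξ) ≤ (k : ℝ) / (J + 1)) := by
  exact mSymbol_properties_general φ hφ_nonneg hφ_le_one hφ_one hφ_zero
    (fun ξ ↦ apply_le_apply_of_even_of_antitoneOn hφ_even hφ_mono (abs_le_abs_two_mul ξ)) J
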